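/- Let q > 0, let u ∈ Conv_coe(ℝⁿ) with the origin in the interior of dom(u), and let ζ ∈ C_rec(ℝⁿ) be Lipschitz. Then both integrals ∫_{ℝⁿ} |ζ(∇u(x))| e^{-u(x)} |x|^{q-n} dx and ∫_{∂dom(u)} |ρ_ζ(N_{dom(u)}(y))| e^{-u(y)} |y|^{q-n} dH^{n-1}(y) are finite. -/

import Mathlib

open MeasureTheory Metric Set Filter
open scoped RealInnerProductSpace Pointwise Topology NNReal ENNReal

noncomputable section

namespace PaperJU

open Classical

/-- Euclidean space ℝⁿ. -/
abbrev E (n : ℕ) := EuclideanSpace ℝ (Fin n)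

variable {n : ℕ}

/-- The pairing (x, z) ∈ ℝⁿ × ℝ ↦ ℝ^{n+1}. -/
def pairE (x : E n) (z : ℝ) : E (n + 1) :=
  (EuclideanSpace.equiv (Fin (n + 1)) ℝ).symm (Fin.snoc (EuclideanSpace.equiv (Fin n) ℝ x) z)

/-- Orthogonal projection onto H = e_{n+1}^⊥ ≅ ℝⁿ. -/
def fstE (X : E (n + 1)) : E n :=
  (EuclideanSpace.equiv (Fin n) ℝ).symm (Fin.init (EuclideanSpace.equiv (Fin (n + 1)) ℝ X))

/-- The last coordinate of X ∈ ℝ^{n+1}. -/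
def sndE (X : E (n + 1)) : ℝ := X (Fin.last n)

/-- Reflection across H = e_{n+1}^⊥. -/
def reflH (X : E (n + 1)) : E (n + 1) := pairE (fstE X) (-(sndE X))

/-- Epigraph of u, as a subset of ℝⁿ × ℝ. -/
def epi (u : E n → EReal) : Set (E n × ℝ) := {p | u p.1 ≤ (p.2 : EReal)}

/-- Epigraph of u, as a subset of ℝ^{n+1}. -/
def epiF (u : E n → EReal) : Set (E (n + 1)) := {X | u (fstE X) ≤ ((sndE X : ℝ) : EReal)}

/-- Effective domain of u. -/
def dom (u : E n → EReal) : Set (E n) := {x | u x ≠ ⊤}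

/-- u ∈ Conv(ℝⁿ): convex (epigraph convex), lower semicontinuous, proper, never -∞. -/
structure IsConvFn (u : E n → EReal) : Prop where
  convex_epi : Convex ℝ (epi u)
  lsc : LowerSemicontinuous u
  ne_bot : ∀ x, u x ≠ ⊥
  exists_ne_top : ∃ x, u x ≠ ⊤

/-- u ∈ Conv_cd(ℝⁿ): convex with compact domain. -/
def IsConvCd (u : E n → EReal) : Prop := IsConvFn u ∧ IsCompact (dom u)

/-- u ∈ Conv_coe(ℝⁿ): convex and coercive. -/
def IsConvCoe (u : E n → EReal) : Prop :=
  IsConvFn u ∧ Tendsto u (cocompact (E n)) (𝓝 (⊤ : EReal))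

/-- Fenchel–Legendre transform of an extended-real-valued function. -/
def legendre (u : E n → EReal) (y : E n) : EReal :=
  ⨆ x : E n, ((⟪x, y⟫ : ℝ) : EReal) - u x

/-- Real-valued Fenchel–Legendre transform (when finite). -/
def legendreR (u : E n → EReal) (y : E n) : ℝ := (legendre u y).toReal

/-- Fenchel–Legendre transform of a real-valued function. -/
def conjR (f : E n → ℝ) (x : E n) : EReal := ⨆ y : E n, ((⟪x, y⟫ - f y : ℝ) : EReal)

/-- The perturbation u_t = (u* + tζ)*. -/
def pert (u : E n → EReal) (ζ : E n → ℝ) (t : ℝ) : E n → EReal :=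
  conjR fun y => legendreR u y + t * ζ y

/-- e^{-a} for a ∈ ℝ ∪ {±∞}, with e^{-(+∞)} = 0. -/
def expNeg (a : EReal) : ℝ := if a = ⊤ then 0 else Real.exp (-a.toReal)

/-- The functional volume μ_n(u) = ∫ e^{-u}. -/
def muN (u : E n → EReal) : ℝ := ∫ x : E n, expNeg (u x)

/-- The q-th dual functional volume μ_q(u) = ∫ e^{-u(x)} |x|^{q-n} dx. -/
def muQ (q : ℝ) (u : E n → EReal) : ℝ := ∫ x : E n, expNeg (u x) * ‖x‖ ^ (q - (n : ℝ))

/-- The gradient ∇u, computed through the real-valued representative of u. -/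
def grad (u : E n → EReal) (x : E n) : E n := gradient (fun y => (u y).toReal) x

/-- ν is an outer unit normal vector to K at the boundary point y. -/
def IsOuterNormalAt (K : Set (E n)) (ν y : E n) : Prop :=
  ‖ν‖ = 1 ∧ ∀ x ∈ K, (⟪x, ν⟫ : ℝ) ≤ ⟪y, ν⟫

/-- Support function of a set. -/
def suppFn (K : Set (E n)) (x : E n) : ℝ := (⨆ y ∈ K, ((⟪y, x⟫ : ℝ) : EReal)).toReal

/-- Infimal convolution. -/
def infConv (u v : E n → EReal) (x : E n) : EReal := ⨅ y : E n, u y + v (x - y)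

/-- Epi-multiplication t ⊡ v. -/
def epiMul (t : ℝ) (v : E n → EReal) : E n → EReal :=
  if t = 0 then fun x => if x = 0 then (0 : EReal) else ⊤
  else fun x => (t : EReal) * v (t⁻¹ • x)

/-- Convex indicator function of a set. -/
def indicatorE (A : Set (E n)) : E n → EReal := fun x => if x ∈ A then (0 : EReal) else ⊤

/-- ζ ∈ C_rec(ℝⁿ), with (1-homogeneously extended) recession function ρ. -/
structure IsCRec (ζ ρ : E n → ℝ) : Prop where
  cont : Continuous ζ
  rec_cont : Continuous ρ
  rec_zero : ρ 0 = 0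
  rec_homog : ∀ c : ℝ, 0 ≤ c → ∀ x, ρ (c • x) = c * ρ x
  rec_lim : ∀ ν : E n, ‖ν‖ = 1 → Tendsto (fun t : ℝ => ζ (t • ν) / t) atTop (𝓝 (ρ ν))
  diff_bdd : ∃ C : ℝ, ∀ x, |ρ x - ζ x| ≤ C

/-- Wulff shape of f : S^{n-1} → ℝ. -/
def wulff (f : E n → ℝ) : Set (E n) := ⋂ ν ∈ sphere (0 : E n) 1, {x : E n | (⟪x, ν⟫ : ℝ) ≤ f ν}

/-- Lower boundary function ⌊K⌋ of a subset of ℝ^{n+1}. -/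
def lfloor (K : Set (E (n + 1))) (x : E n) : EReal := ⨅ t ∈ {t : ℝ | pairE x t ∈ K}, (t : EReal)

/-- M_u, the maximum of u over its domain. -/
def maxVal (u : E n → EReal) : ℝ := sSup ((fun x => (u x).toReal) '' dom u)

/-- The body K^u = (epi(u - M_u) ∩ R_H(epi(u - M_u))) + M_u e_{n+1}. -/
def Ku (u : E n → EReal) : Set (E (n + 1)) :=
  (fun X => X + pairE (0 : E n) (maxVal u)) ''
    ({X : E (n + 1) | u (fstE X) ≤ ((sndE X + maxVal u : ℝ) : EReal)} ∩
      reflH '' {X : E (n + 1) | u (fstE X) ≤ ((sndE X + maxVal u : ℝ) : EReal)})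

/-- The vertical segment ℓ_s = {r e_{n+1} : r ∈ [0, s]}. -/
def segZ (n : ℕ) (s : ℝ) : Set (E (n + 1)) := (fun r : ℝ => pairE (0 : E n) r) '' Icc 0 s

/-- Gnomonic projection. -/
def gnom (ν : E (n + 1)) : E n := (sndE ν)⁻¹ • fstE ν

/-- The function ζ̄ on Sⁿ built from ζ and its recession function ρ. -/
def zbar (ζ ρ : E n → ℝ) (ν : E (n + 1)) : ℝ :=
  if sndE ν < 0 then ζ (gnom ν) / Real.sqrt (1 + ‖gnom ν‖ ^ 2)
  else if 0 < sndE ν then ζ (gnom (reflH ν)) / Real.sqrt (1 + ‖gnom (reflH ν)‖ ^ 2)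
  else ρ (fstE ν)

/-- Weighted surface area measure S_{μ,K}, realized via a choice of Gauss map N. -/
def surfMeas (w : E (n + 1) → ℝ) (K : Set (E (n + 1))) (N : E (n + 1) → E (n + 1)) :
    Measure (E (n + 1)) :=
  Measure.map N (((μH[(n : ℝ)]).restrict (frontier K)).withDensity fun X => ENNReal.ofReal (w X))

/-- φ evaluated at a ∈ EReal (0 at +∞). -/
def phiE (φ : ℝ → ℝ) (a : EReal) : ℝ := if a = ⊤ then 0 else φ a.toReal

/-- Φ(a) = ∫_a^{+∞} φ(z) dz, extended by 0 at a = +∞. -/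
def PhiE (φ : ℝ → ℝ) (a : EReal) : ℝ := if a = ⊤ then 0 else ∫ z in Ici a.toReal, φ z

/-- Standard Gaussian density on ℝ^m. -/
def gaussDensity (m : ℕ) (X : E m) : ℝ :=
  (2 * Real.pi) ^ (-(m : ℝ) / 2) * Real.exp (-(‖X‖ ^ 2 / 2))

/-- Standard Gaussian measure on ℝ^m. -/
def gaussMeas (m : ℕ) : Measure (E m) :=
  volume.withDensity fun X => ENNReal.ofReal (gaussDensity m X)

/-- Gaussian symmetric-difference distance. -/
def dGauss {m : ℕ} (K L : Set (E m)) : ℝ := (gaussMeas m (symmDiff K L)).toReal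

/-- The class K^{n+1}_+. -/
def KPlus (n : ℕ) : Set (Set (E (n + 1))) :=
  {K | Convex ℝ K ∧ IsClosed K ∧ (interior K).Nonempty ∧
    IsCompact (fstE '' K) ∧ Convex ℝ (fstE '' K) ∧ (interior (fstE '' K)).Nonempty}

/-- Epi-convergence of a sequence of functions. -/
def EpiConverges (um : ℕ → E n → EReal) (u : E n → EReal) : Prop :=
  ∀ x : E n,
    (∀ xs : ℕ → E n, Tendsto xs atTop (𝓝 x) →
      u x ≤ Filter.liminf (fun m => um m (xs m)) atTop) ∧
    ∃ xs : ℕ → E n, Tendsto xs atTop (𝓝 x) ∧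
      Tendsto (fun m => um m (xs m)) atTop (𝓝 (u x))

/-! By coercivity and convexity, `u x ≥ a‖x‖ - b` for some `a > 0`, so `e^{-u}` decays
exponentially, and `‖x‖^{q-n}` is integrable at the origin because `q > 0`. Since `ζ` and `ρ` grow
at most linearly, two estimates remain.

* The function `e^{-u/2}` is quasiconcave: along each line it increases and then decreases, so the
  total variation of its restriction is at most twice its maximum. Integrating over the lines
  parallel to each axis, `∇ e^{-u/2}` is integrable, that is, `‖∇u‖ e^{-u/2}` is. Away from the
  origin the other factor `e^{-u/2}` absorbs the weight; near the origin `∇u` is bounded, as `u`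
  is convex and finite there.
* The surface area of a convex set inside a bounded set `B` is at most that of `B`, so `∂ dom u`
  has area `O(R^{n-1})` in the ball of radius `R`. Hence `e^{-c‖y‖}` is integrable on `∂ dom u`,
  which stays away from the origin.
-/

/-! ### Quasiconcave functions on the line -/

theorem lintegral_enorm_deriv_le_of_monotoneOn {f : ℝ → ℝ} {a b : ℝ} (hab : a ≤ b)
    (hf : MonotoneOn f (Icc a b)) :
    ∫⁻ x in Icc a b, ‖deriv f x‖ₑ ≤ ENNReal.ofReal (f b - f a) := by
  obtain ⟨G, hG_tendsto, hG_meas, hG_le⟩ := hf.exists_tendsto_deriv_liminf_lintegral_enorm_le hab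
  exact (lintegral_enorm_le_liminf_of_tendsto hG_tendsto
    fun k => (hG_meas k).aemeasurable.enorm).trans hG_le

theorem lintegral_enorm_deriv_le_of_antitoneOn {f : ℝ → ℝ} {a b : ℝ} (hab : a ≤ b)
    (hf : AntitoneOn f (Icc a b)) :
    ∫⁻ x in Icc a b, ‖deriv f x‖ₑ ≤ ENNReal.ofReal (f a - f b) := by
  simpa [neg_add_eq_sub] using lintegral_enorm_deriv_le_of_monotoneOn hab hf.neg

theorem monotoneOn_inter_Iic_of_quasiconcaveOn {f : ℝ → ℝ} {s : Set ℝ} {c : ℝ}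
    (hf : QuasiconcaveOn ℝ s f) (hc : c ∈ s) (hmax : IsMaxOn f s c) :
    MonotoneOn f (s ∩ Iic c) := fun x hx _ hy hxy =>
  ((hf (f x)).ordConnected.out ⟨hx.1, le_rfl⟩ ⟨hc, hmax hx.1⟩ ⟨hxy, hy.2⟩).2

theorem antitoneOn_inter_Ici_of_quasiconcaveOn {f : ℝ → ℝ} {s : Set ℝ} {c : ℝ}
    (hf : QuasiconcaveOn ℝ s f) (hc : c ∈ s) (hmax : IsMaxOn f s c) :
    AntitoneOn f (s ∩ Ici c) := fun _ hx y hy hxy =>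
  ((hf (f y)).ordConnected.out ⟨hc, hmax hy.1⟩ ⟨hy.1, le_rfl⟩ ⟨hx.2, hxy⟩).2

theorem lintegral_Icc_enorm_deriv_le_of_quasiconcaveOn {f : ℝ → ℝ} {a b M : ℝ} (hab : a ≤ b)
    (hf : QuasiconcaveOn ℝ (Icc a b) f) (husc : UpperSemicontinuousOn f (Icc a b))
    (h0 : ∀ t ∈ Icc a b, 0 ≤ f t) (hM : ∀ t ∈ Icc a b, f t ≤ M) :
    ∫⁻ t in Icc a b, ‖deriv f t‖ₑ ≤ ENNReal.ofReal (2 * M) := by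
  obtain ⟨c, hc, hmax⟩ := husc.exists_isMaxOn (nonempty_Icc.2 hab) isCompact_Icc
  have hleft : MonotoneOn f (Icc a c) :=
    (monotoneOn_inter_Iic_of_quasiconcaveOn hf hc hmax).mono
      fun _ ht => ⟨⟨ht.1, ht.2.trans hc.2⟩, ht.2⟩
  have hright : AntitoneOn f (Icc c b) :=
    (antitoneOn_inter_Ici_of_quasiconcaveOn hf hc hmax).mono
      fun _ ht => ⟨⟨hc.1.trans ht.1, ht.2⟩, ht.1⟩
  have hM0 : 0 ≤ M := (h0 c hc).trans (hM c hc)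
  calc ∫⁻ t in Icc a b, ‖deriv f t‖ₑ
      ≤ (∫⁻ t in Icc a c, ‖deriv f t‖ₑ) + ∫⁻ t in Icc c b, ‖deriv f t‖ₑ := by
        rw [← Icc_union_Icc_eq_Icc hc.1 hc.2]
        exact lintegral_union_le _ _ _
    _ ≤ ENNReal.ofReal (f c - f a) + ENNReal.ofReal (f c - f b) :=
        add_le_add (lintegral_enorm_deriv_le_of_monotoneOn hc.1 hleft)
          (lintegral_enorm_deriv_le_of_antitoneOn hc.2 hright)
    _ ≤ ENNReal.ofReal M + ENNReal.ofReal M := by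
        gcongr
        · linarith [hM c hc, h0 a (left_mem_Icc.2 hab)]
        · linarith [hM c hc, h0 b (right_mem_Icc.2 hab)]
    _ = ENNReal.ofReal (2 * M) := by rw [two_mul, ENNReal.ofReal_add hM0 hM0]

theorem lintegral_enorm_deriv_le_of_quasiconcaveOn {f : ℝ → ℝ} {M : ℝ}
    (hf : QuasiconcaveOn ℝ univ f) (husc : UpperSemicontinuous f)
    (h0 : ∀ t, 0 ≤ f t) (hM : ∀ t, f t ≤ M) :
    ∫⁻ t, ‖deriv f t‖ₑ ≤ ENNReal.ofReal (2 * M) := by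
  have hcover : AECover volume atTop fun k : ℕ => Icc (-(k : ℝ)) k :=
    aecover_Icc (tendsto_neg_atTop_atBot.comp tendsto_natCast_atTop_atTop)
      tendsto_natCast_atTop_atTop
  refine le_of_tendsto' (hcover.lintegral_tendsto_of_countably_generated
    (measurable_deriv f).enorm.aemeasurable) fun k => ?_
  exact lintegral_Icc_enorm_deriv_le_of_quasiconcaveOn
    ((neg_nonpos.2 k.cast_nonneg).trans k.cast_nonneg)
    ((convex_Icc _ _).quasiconcaveOn_restrict hf (subset_univ _))
    (husc.upperSemicontinuousOn _) (fun t _ => h0 t) fun t _ => hM t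

/-! ### Exponential weights -/

theorem exists_rpow_mul_exp_neg_mul_le (s : ℝ) {c r : ℝ} (hc : 0 < c) (hr : 0 < r) :
    ∃ C, 0 ≤ C ∧ ∀ t, r ≤ t → t ^ s * Real.exp (-c * t) ≤ C := by
  obtain ⟨T, hT⟩ := eventually_atTop.1
    ((tendsto_rpow_mul_exp_neg_mul_atTop_nhds_zero s c hc).eventually (ge_mem_nhds one_pos))
  have hcont : ContinuousOn (fun t : ℝ => t ^ s * Real.exp (-c * t)) (Icc r T) :=
    (continuousOn_id.rpow_const fun t ht => Or.inl (hr.trans_le ht.1).ne').mul (by fun_prop)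
  obtain ⟨C, hC⟩ := isCompact_Icc.bddAbove_image hcont
  refine ⟨max C 1, zero_le_one.trans (le_max_right _ _), fun t ht => ?_⟩
  rcases le_or_gt t T with h | h
  · exact le_max_of_le_left (hC ⟨t, ⟨ht, h⟩, rfl⟩)
  · exact le_max_of_le_right (hT t h.le)

section NormedAddCommGroup

variable {F : Type*} [NormedAddCommGroup F] [MeasurableSpace F]

theorem lintegral_exp_neg_norm_shell_le [OpensMeasurableSpace F] {μ : Measure F} {D : ℝ≥0} {m : ℕ}
    (hμ : ∀ R : ℝ, 0 < R → μ (closedBall 0 R) ≤ D * ENNReal.ofReal (R ^ m)) {c : ℝ} (hc : 0 < c)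
    (k : ℕ) :
    ∫⁻ x in {x | ⌊‖x‖⌋₊ = k}, ‖Real.exp (-c * ‖x‖)‖ₑ ∂μ ≤
      D * ENNReal.ofReal (((k : ℝ) + 1) ^ m * Real.exp (-c * k)) := by
  have hshell : {x : F | ⌊‖x‖⌋₊ = k} ⊆ closedBall 0 (k + 1) := fun x hx => by
    rw [mem_closedBall_zero_iff, ← show ⌊‖x‖⌋₊ = k from hx]
    exact (Nat.lt_floor_add_one _).le
  have hmeas : MeasurableSet {x : F | ⌊‖x‖⌋₊ = k} :=
    (Nat.measurable_floor.comp measurable_norm) (measurableSet_singleton k)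
  calc ∫⁻ x in {x | ⌊‖x‖⌋₊ = k}, ‖Real.exp (-c * ‖x‖)‖ₑ ∂μ
      ≤ ∫⁻ _ in {x | ⌊‖x‖⌋₊ = k}, ENNReal.ofReal (Real.exp (-c * k)) ∂μ := by
        refine setLIntegral_mono' hmeas fun x hx => ?_
        rw [Real.enorm_eq_ofReal (Real.exp_nonneg _)]
        refine ENNReal.ofReal_le_ofReal (Real.exp_le_exp.2 ?_)
        have : (k : ℝ) ≤ ‖x‖ :=
          (Nat.le_floor_iff (norm_nonneg x)).1 (show ⌊‖x‖⌋₊ = k from hx).ge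
        nlinarith
    _ ≤ ENNReal.ofReal (Real.exp (-c * k)) * (D * ENNReal.ofReal (((k : ℝ) + 1) ^ m)) := by
        rw [setLIntegral_const]
        gcongr
        exact (measure_mono hshell).trans (hμ _ (by positivity))
    _ = D * ENNReal.ofReal (((k : ℝ) + 1) ^ m * Real.exp (-c * k)) := by
        rw [ENNReal.ofReal_mul (by positivity)]
        ring

theorem integrable_exp_neg_norm_of_measure_closedBall_le [BorelSpace F] {μ : Measure F} {D : ℝ≥0}
    {m : ℕ} (hμ : ∀ R : ℝ, 0 < R → μ (closedBall 0 R) ≤ D * ENNReal.ofReal (R ^ m)) {c : ℝ}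
    (hc : 0 < c) :
    Integrable (fun x => Real.exp (-c * ‖x‖)) μ := by
  refine ⟨(by fun_prop : Measurable fun x : F => Real.exp (-c * ‖x‖)).aestronglyMeasurable, ?_⟩
  have hsum : Summable fun k : ℕ => ((k : ℝ) + 1) ^ m * Real.exp (-c * k) := by
    have h := ((summable_nat_add_iff 1).2
      (Real.summable_pow_mul_exp_neg_nat_mul m hc)).mul_left (Real.exp c)
    refine h.congr fun k => ?_
    rw [mul_left_comm, ← Real.exp_add]
    push_cast
    ring_nf
  have hcover : (⋃ k : ℕ, {x : F | ⌊‖x‖⌋₊ = k}) = univ :=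
    eq_univ_of_forall fun x => mem_iUnion.2 ⟨_, rfl⟩
  calc ∫⁻ x, ‖Real.exp (-c * ‖x‖)‖ₑ ∂μ
      = ∫⁻ x in ⋃ k : ℕ, {x | ⌊‖x‖⌋₊ = k}, ‖Real.exp (-c * ‖x‖)‖ₑ ∂μ := by
        rw [hcover, setLIntegral_univ]
    _ ≤ ∑' k : ℕ, ∫⁻ x in {x | ⌊‖x‖⌋₊ = k}, ‖Real.exp (-c * ‖x‖)‖ₑ ∂μ :=
        lintegral_iUnion_le _ _
    _ ≤ ∑' k : ℕ, D * ENNReal.ofReal (((k : ℝ) + 1) ^ m * Real.exp (-c * k)) :=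
        ENNReal.tsum_le_tsum (lintegral_exp_neg_norm_shell_le hμ hc)
    _ = D * ENNReal.ofReal (∑' k : ℕ, ((k : ℝ) + 1) ^ m * Real.exp (-c * k)) := by
        rw [ENNReal.tsum_mul_left, ENNReal.ofReal_tsum_of_nonneg (fun k => by positivity) hsum]
    _ < ⊤ := ENNReal.mul_lt_top ENNReal.coe_lt_top ENNReal.ofReal_lt_top

variable [NormedSpace ℝ F] [FiniteDimensional ℝ F] [BorelSpace F]

theorem integrable_exp_neg_norm_addHaar (μ : Measure F) [μ.IsAddHaarMeasure] {c : ℝ}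
    (hc : 0 < c) : Integrable (fun x => Real.exp (-c * ‖x‖)) μ := by
  refine integrable_exp_neg_norm_of_measure_closedBall_le (D := (μ (closedBall 0 1)).toNNReal)
    (m := Module.finrank ℝ F) (fun R hR => ?_) hc
  rw [Measure.addHaar_closedBall' μ 0 hR.le, mul_comm,
    ENNReal.coe_toNNReal measure_closedBall_lt_top.ne]

theorem integrable_exp_neg_mul_norm_rpow (μ : Measure F) [μ.IsAddHaarMeasure] {q c : ℝ}
    (hq : 0 < q) (hc : 0 < c) :
    Integrable (fun x => Real.exp (-c * ‖x‖) * ‖x‖ ^ (q - Module.finrank ℝ F)) μ := by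
  cases subsingleton_or_nontrivial F
  · exact .of_finite
  refine (integrable_fun_norm_addHaar μ (f := fun t : ℝ =>
    Real.exp (-c * t) * t ^ (q - Module.finrank ℝ F))).2 ?_
  refine (integrableOn_rpow_mul_exp_neg_mul_rpow (p := 1) (s := q - 1) (by linarith) one_pos
    hc).congr_fun (fun t (ht : 0 < t) => ?_) measurableSet_Ioi
  have hexp : q - 1 = ((Module.finrank ℝ F - 1 : ℕ) : ℝ) + (q - Module.finrank ℝ F) := by
    rw [Nat.cast_sub Module.finrank_pos]
    push_cast
    ring
  dsimp only
  rw [Real.rpow_one, hexp, Real.rpow_add ht, Real.rpow_natCast, smul_eq_mul]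
  ring

end NormedAddCommGroup

theorem exists_mul_norm_rpow_le_mul_exp_neg {F : Type*} [SeminormedAddGroup F] {g : F → ℝ}
    (s : ℝ) {a C r : ℝ} (ha : 0 < a) (hC : 0 ≤ C) (hr : 0 < r)
    (hg : ∀ x, g x ≤ C * Real.exp (-a * ‖x‖)) :
    ∃ C' : ℝ, 0 ≤ C' ∧ ∀ x, r ≤ ‖x‖ → g x * ‖x‖ ^ s ≤ C' * Real.exp (-(a / 2) * ‖x‖) := by
  obtain ⟨B, hB0, hB⟩ := exists_rpow_mul_exp_neg_mul_le s (half_pos ha) hr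
  refine ⟨C * B, mul_nonneg hC hB0, fun x hx => ?_⟩
  calc g x * ‖x‖ ^ s ≤ C * Real.exp (-a * ‖x‖) * ‖x‖ ^ s := by gcongr; exact hg x
    _ = C * (‖x‖ ^ s * Real.exp (-(a / 2) * ‖x‖)) * Real.exp (-(a / 2) * ‖x‖) := by
        rw [show -a * ‖x‖ = -(a / 2) * ‖x‖ + -(a / 2) * ‖x‖ by ring, Real.exp_add]
        ring
    _ ≤ C * B * Real.exp (-(a / 2) * ‖x‖) := by gcongr; exact hB _ hx

/-! ### Gradients of quasiconcave functions -/

theorem enorm_fderiv_apply_le_enorm_deriv {V : Type*} [NormedAddCommGroup V] [NormedSpace ℝ V]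
    (f : V → ℝ) (p e : V) (t : ℝ) :
    ‖fderiv ℝ f (p + t • e) e‖ₑ ≤ ‖deriv (fun s : ℝ => f (p + s • e)) t‖ₑ := by
  by_cases hf : DifferentiableAt ℝ f (p + t • e)
  · have hline : HasDerivAt (fun s : ℝ => p + s • e) e t := by
      simpa using ((hasDerivAt_id t).smul_const e).const_add p
    exact (congrArg _ (hf.hasFDerivAt.comp_hasDerivAt t hline).deriv.symm).le
  · simp [fderiv_zero_of_not_differentiableAt hf]

theorem integrable_fderiv_of_basis {V ι : Type*} [NormedAddCommGroup V] [NormedSpace ℝ V]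
    [MeasurableSpace V] [BorelSpace V] [Finite ι] {μ : Measure V}
    (b : Module.Basis ι ℝ V) {f : V → ℝ}
    (hf : ∀ i, ∫⁻ x, ‖fderiv ℝ f x (b i)‖ₑ ∂μ < ⊤) : Integrable (fderiv ℝ f) μ := by
  cases nonempty_fintype ι
  have := b.finiteDimensional_of_finite
  obtain ⟨C, -, hC⟩ := b.exists_opNorm_le (F := ℝ)
  have hsum : Integrable (fun x => ∑ i, ‖fderiv ℝ f x (b i)‖) μ :=
    integrable_finsetSum _ fun i _ => Integrable.norm
      ⟨(measurable_fderiv_apply_const ℝ f (b i)).aestronglyMeasurable, hf i⟩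
  refine (hsum.const_mul C).mono' (measurable_fderiv ℝ f).aestronglyMeasurable
    (ae_of_all _ fun x => hC (by positivity) fun i => ?_)
  exact Finset.single_le_sum (f := fun i => ‖fderiv ℝ f x (b i)‖) (fun _ _ => norm_nonneg _)
    (Finset.mem_univ i)

theorem lintegral_eq_lintegral_lintegral_insertNth (i : Fin (n + 1)) {g : E (n + 1) → ℝ≥0∞}
    (hg : Measurable g) :
    ∫⁻ x, g x = ∫⁻ y : Fin n → ℝ, ∫⁻ t : ℝ, g (WithLp.toLp 2 (i.insertNth t y)) := by
  have hmp := (PiLp.volume_preserving_toLp (Fin (n + 1))).comp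
    (volume_preserving_piFinSuccAbove (fun _ : Fin (n + 1) => ℝ) i).symm
  rw [← hmp.lintegral_comp hg, Measure.volume_eq_prod]
  exact lintegral_prod_symm _ (hg.comp hmp.measurable).aemeasurable

theorem toLp_insertNth_eq_add_smul_single (i : Fin (n + 1)) (t : ℝ) (y : Fin n → ℝ) :
    (WithLp.toLp 2 (i.insertNth t y) : E (n + 1)) =
      WithLp.toLp 2 (i.insertNth (0 : ℝ) y) + t • EuclideanSpace.single i (1 : ℝ) := by
  ext j
  refine i.succAboveCases ?_ (fun k => ?_) j <;> simp

theorem norm_le_norm_toLp_insertNth (i : Fin (n + 1)) (t : ℝ) (y : Fin n → ℝ) :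
    ‖y‖ ≤ ‖(WithLp.toLp 2 (i.insertNth t y) : E (n + 1))‖ :=
  (pi_norm_le_iff_of_nonneg (norm_nonneg _)).2 fun j => by
    simpa using PiLp.norm_apply_le (WithLp.toLp 2 (i.insertNth t y) : E (n + 1)) (i.succAbove j)

theorem lintegral_enorm_deriv_line_le {V : Type*} [AddCommGroup V] [Module ℝ V]
    [TopologicalSpace V] [ContinuousAdd V] [ContinuousSMul ℝ V] {f : V → ℝ} {M : ℝ}
    (hf : QuasiconcaveOn ℝ univ f) (husc : UpperSemicontinuous f) (h0 : ∀ x, 0 ≤ f x) (p e : V)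
    (hM : ∀ t : ℝ, f (p + t • e) ≤ M) :
    ∫⁻ t : ℝ, ‖deriv (fun s : ℝ => f (p + s • e)) t‖ₑ ≤ ENNReal.ofReal (2 * M) := by
  refine lintegral_enorm_deriv_le_of_quasiconcaveOn
    (quasiconcaveOn_iff_min_le.2 ⟨convex_univ, fun s _ t _ α β hα hβ hαβ => ?_⟩)
    (husc.comp (by fun_prop : Continuous fun t : ℝ => p + t • e)) (fun t => h0 _) hM
  have hcomb : p + (α • s + β • t) • e = α • (p + s • e) + β • (p + t • e) := by
    obtain rfl : β = 1 - α := eq_sub_iff_add_eq'.2 hαβ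
    module
  rw [hcomb]
  exact (quasiconcaveOn_iff_min_le.1 hf).2 (mem_univ _) (mem_univ _) hα hβ hαβ

theorem lintegral_enorm_fderiv_single_lt_top {f : E (n + 1) → ℝ}
    (hf : QuasiconcaveOn ℝ univ f) (husc : UpperSemicontinuous f) (h0 : ∀ x, 0 ≤ f x) {c C : ℝ}
    (hc : 0 < c) (hC : ∀ x, f x ≤ C * Real.exp (-c * ‖x‖)) (i : Fin (n + 1)) :
    ∫⁻ x, ‖fderiv ℝ f x (EuclideanSpace.single i (1 : ℝ))‖ₑ < ⊤ := by
  set e : E (n + 1) := EuclideanSpace.single i (1 : ℝ)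
  have hC0 : 0 ≤ C := by simpa using (h0 0).trans (hC 0)
  have hline : ∀ y : Fin n → ℝ, ∫⁻ t : ℝ, ‖fderiv ℝ f (WithLp.toLp 2 (i.insertNth t y)) e‖ₑ ≤
      ENNReal.ofReal (2 * (C * Real.exp (-c * ‖y‖))) := fun y => by
    refine (lintegral_mono fun t => ?_).trans (lintegral_enorm_deriv_line_le hf husc h0
      (WithLp.toLp 2 (i.insertNth (0 : ℝ) y)) e fun t => ?_)
    · rw [toLp_insertNth_eq_add_smul_single]
      exact enorm_fderiv_apply_le_enorm_deriv _ _ _ _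
    · rw [← toLp_insertNth_eq_add_smul_single]
      refine (hC _).trans ?_
      gcongr ?_ * Real.exp ?_
      exact mul_le_mul_of_nonpos_left (norm_le_norm_toLp_insertNth i t y) (neg_nonpos.2 hc.le)
  calc ∫⁻ x, ‖fderiv ℝ f x e‖ₑ
      = ∫⁻ y : Fin n → ℝ, ∫⁻ t : ℝ, ‖fderiv ℝ f (WithLp.toLp 2 (i.insertNth t y)) e‖ₑ :=
        lintegral_eq_lintegral_lintegral_insertNth i (measurable_fderiv_apply_const ℝ f e).enorm
    _ ≤ ∫⁻ y : Fin n → ℝ, ENNReal.ofReal (2 * (C * Real.exp (-c * ‖y‖))) := lintegral_mono hline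
    _ < ⊤ :=
        (((integrable_exp_neg_norm_addHaar volume hc).const_mul C).const_mul 2).lintegral_lt_top

theorem integrable_fderiv_of_quasiconcaveOn {f : E n → ℝ} (hf : QuasiconcaveOn ℝ univ f)
    (husc : UpperSemicontinuous f) (h0 : ∀ x, 0 ≤ f x) {c C : ℝ} (hc : 0 < c)
    (hC : ∀ x, f x ≤ C * Real.exp (-c * ‖x‖)) : Integrable (fderiv ℝ f) := by
  refine integrable_fderiv_of_basis (EuclideanSpace.basisFun (Fin n) ℝ).toBasis fun i => ?_
  cases n with
  | zero => exact i.elim0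
  | succ n => simpa using lintegral_enorm_fderiv_single_lt_top hf husc h0 hc hC i

/-! ### Surface area of convex sets -/

section InnerProductSpace

variable {V : Type*} [NormedAddCommGroup V] [InnerProductSpace ℝ V]

theorem norm_sub_le_norm_sub_of_inner_nonpos {y₁ y₂ z₁ z₂ : V}
    (h₁ : (⟪z₁ - y₁, y₂ - y₁⟫ : ℝ) ≤ 0) (h₂ : (⟪z₂ - y₂, y₁ - y₂⟫ : ℝ) ≤ 0) :
    ‖y₁ - y₂‖ ≤ ‖z₁ - z₂‖ := by
  have hexpand : (⟪z₁ - z₂, y₁ - y₂⟫ : ℝ) - ⟪y₁ - y₂, y₁ - y₂⟫ =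
      -⟪z₁ - y₁, y₂ - y₁⟫ - ⟪z₂ - y₂, y₁ - y₂⟫ := by
    simp only [inner_sub_left, inner_sub_right]
    ring
  have hsq : ‖y₁ - y₂‖ * ‖y₁ - y₂‖ ≤ ‖z₁ - z₂‖ * ‖y₁ - y₂‖ := by
    rw [← real_inner_self_eq_norm_mul_norm]
    linarith [real_inner_le_norm (z₁ - z₂) (y₁ - y₂)]
  by_contra! hlt
  exact hsq.not_gt (mul_lt_mul_of_pos_right hlt ((norm_nonneg _).trans_lt hlt))

theorem exists_inner_le_of_mem_frontier [CompleteSpace V] {K : Set V} (hK : Convex ℝ K)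
    (hKi : (interior K).Nonempty) {y : V} (hy : y ∈ frontier K) :
    ∃ ν : V, ν ≠ 0 ∧ ∀ x ∈ closure K, (⟪ν, x⟫ : ℝ) ≤ ⟪ν, y⟫ := by
  obtain ⟨f, hf⟩ := geometric_hahn_banach_open_point hK.interior isOpen_interior hy.2
  obtain ⟨ν, rfl⟩ := (InnerProductSpace.toDual ℝ V).surjective f
  simp only [InnerProductSpace.toDual_apply_apply] at hf
  refine ⟨ν, ?_, fun x hx => ?_⟩
  · rintro rfl
    obtain ⟨x, hx⟩ := hKi
    simpa using hf x hx
  · rw [← hK.closure_interior_eq_closure_of_nonempty_interior hKi] at hx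
    exact closure_minimal (fun x hx => (hf x hx).le)
      (isClosed_le (by fun_prop : Continuous fun x => (⟪ν, x⟫ : ℝ)) continuous_const) hx

theorem exists_nnreal_add_smul_mem_frontier {B : Set V} (hB : Bornology.IsBounded B) {y v : V}
    (hy : y ∈ B) (hv : v ≠ 0) : ∃ t : ℝ≥0, y + t • v ∈ frontier B := by
  obtain ⟨R, hR⟩ := hB.exists_norm_le
  have hR0 : 0 ≤ R := (norm_nonneg y).trans (hR y hy)
  set T : ℝ≥0 := ⟨(R + ‖y‖ + 1) / ‖v‖, by positivity⟩
  have hout : y + T • v ∉ B := fun h => by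
    have hTv : ‖T • v‖ = R + ‖y‖ + 1 := by
      rw [NNReal.smul_def, norm_smul, NNReal.norm_eq]
      exact div_mul_cancel₀ _ (norm_ne_zero_iff.2 hv)
    have hle := norm_sub_le (y + T • v) y
    rw [add_sub_cancel_left, hTv] at hle
    linarith [hR _ h]
  have hcont : Continuous fun t : ℝ≥0 => y + t • v := by fun_prop
  obtain ⟨t, ht⟩ : (frontier ((fun t : ℝ≥0 => y + t • v) ⁻¹' B)).Nonempty :=
    nonempty_frontier_iff.2 ⟨⟨0, by simpa using hy⟩, fun h => hout (h.ge (mem_univ T))⟩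
  exact ⟨t, hcont.frontier_preimage_subset B ht⟩

-- Leaving `B` along normal rays of `K` inverts the nearest-point projection onto `K`, which is
-- 1-Lipschitz.
theorem hausdorffMeasure_frontier_inter_le [CompleteSpace V] [MeasurableSpace V] [BorelSpace V]
    {K B : Set V} (hK : Convex ℝ K) (hKi : (interior K).Nonempty) (hB : Bornology.IsBounded B)
    {d : ℝ} (hd : 0 ≤ d) : μH[d] (frontier K ∩ B) ≤ μH[d] (frontier B) := by
  have hray : ∀ y : ↥(frontier K ∩ B),
      ∃ z ∈ frontier B, ∀ x ∈ closure K, (⟪z - y, x - y⟫ : ℝ) ≤ 0 := fun y => by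
    obtain ⟨ν, hν, hsupp⟩ := exists_inner_le_of_mem_frontier hK hKi y.2.1
    obtain ⟨t, hz⟩ := exists_nnreal_add_smul_mem_frontier hB y.2.2 hν
    refine ⟨_, hz, fun x hx => ?_⟩
    rw [add_sub_cancel_left, NNReal.smul_def, real_inner_smul_left, inner_sub_right]
    exact mul_nonpos_of_nonneg_of_nonpos t.2 (sub_nonpos.2 (hsupp x hx))
  choose z hzB hz using hray
  have hanti : AntilipschitzWith 1 z := AntilipschitzWith.of_le_mul_dist fun y₁ y₂ => by
    rw [NNReal.coe_one, one_mul, Subtype.dist_eq, dist_eq_norm, dist_eq_norm]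
    exact norm_sub_le_norm_sub_of_inner_nonpos (hz y₁ y₂ y₂.2.1.1) (hz y₂ y₁ y₁.2.1.1)
  calc μH[d] (frontier K ∩ B)
      = μH[d] (univ : Set ↥(frontier K ∩ B)) := by
        rw [← (isometry_subtype_coe (s := frontier K ∩ B)).hausdorffMeasure_image (.inl hd),
          image_univ, Subtype.range_coe]
    _ ≤ μH[d] (z '' univ) := by
        simpa using hanti.le_hausdorffMeasure_image hd univ
    _ ≤ μH[d] (frontier B) := measure_mono (by rintro _ ⟨y, -, rfl⟩; exact hzB y)

end InnerProductSpace

theorem isometry_insertNth {m : ℕ} (i : Fin (m + 1)) (c : ℝ) :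
    Isometry fun y : Fin m → ℝ => (i.insertNth c y : Fin (m + 1) → ℝ) :=
  Isometry.of_dist_eq fun y y' => by simp [Fin.dist_insertNth_insertNth]

theorem sphere_subset_iUnion_insertNth_image {m : ℕ} {R : ℝ} (hR : 0 < R) :
    sphere (0 : Fin (m + 1) → ℝ) R ⊆ ⋃ i : Fin (m + 1), ⋃ s : SignType,
      (fun y : Fin m → ℝ => (i.insertNth ((s : ℝ) * R) y : Fin (m + 1) → ℝ)) ''
        closedBall 0 R := by
  intro z hz
  rw [mem_sphere_zero_iff_norm] at hz
  obtain ⟨i, hi⟩ : ∃ i, |z i| = R := by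
    by_contra! hne
    refine ((pi_norm_lt_iff hR).2 fun i => ?_).ne hz
    exact lt_of_le_of_ne (hz ▸ norm_le_pi_norm z i) (hne i)
  refine mem_iUnion₂.2 ⟨i, SignType.sign (z i), i.removeNth z, ?_, ?_⟩
  · rw [mem_closedBall_zero_iff, pi_norm_le_iff_of_nonneg hR.le]
    exact fun j => hz ▸ norm_le_pi_norm z (i.succAbove j)
  · dsimp only
    rw [← hi, sign_mul_abs, Fin.insertNth_self_removeNth]

theorem hausdorffMeasure_closedBall_pi (m : ℕ) {R : ℝ} (hR : 0 ≤ R) :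
    μH[(m : ℝ)] (closedBall (0 : Fin m → ℝ) R) = ENNReal.ofReal ((2 * R) ^ m) := by
  have h := hausdorffMeasure_pi_real (ι := Fin m)
  rw [Fintype.card_fin] at h
  rw [h, Real.volume_pi_closedBall _ hR, Fintype.card_fin]

theorem hausdorffMeasure_sphere_pi_le (m : ℕ) {R : ℝ} (hR : 0 < R) :
    μH[(m : ℝ)] (sphere (0 : Fin (m + 1) → ℝ) R) ≤
      (3 * (m + 1) * 2 ^ m : ℝ≥0) * ENNReal.ofReal (R ^ m) := by
  calc μH[(m : ℝ)] (sphere (0 : Fin (m + 1) → ℝ) R)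
      ≤ ∑ i : Fin (m + 1), ∑ s : SignType, μH[(m : ℝ)]
          ((fun y : Fin m → ℝ => (i.insertNth ((s : ℝ) * R) y : Fin (m + 1) → ℝ)) ''
            closedBall 0 R) := by
        refine (measure_mono (sphere_subset_iUnion_insertNth_image hR)).trans
          ((measure_iUnion_fintype_le _ _).trans ?_)
        exact Finset.sum_le_sum fun i _ => measure_iUnion_fintype_le _ _
    _ = ∑ _i : Fin (m + 1), ∑ _s : SignType, ENNReal.ofReal ((2 * R) ^ m) := by
        simp only [(isometry_insertNth _ _).hausdorffMeasure_image (.inl (Nat.cast_nonneg m)),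
          hausdorffMeasure_closedBall_pi m hR.le]
    _ = (3 * (m + 1) * 2 ^ m : ℝ≥0) * ENNReal.ofReal (R ^ m) := by
        rw [mul_pow, ENNReal.ofReal_mul (by positivity), ENNReal.ofReal_pow zero_le_two]
        simp only [ENNReal.ofReal_ofNat, Finset.sum_const, Finset.card_univ,
          show Fintype.card SignType = 3 from rfl, nsmul_eq_mul, Nat.cast_ofNat, Fintype.card_fin,
          Nat.cast_add, Nat.cast_one, ENNReal.coe_mul, ENNReal.coe_ofNat, ENNReal.coe_add,
          ENNReal.coe_natCast, ENNReal.coe_one, ENNReal.coe_pow]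
        ring

theorem exists_hausdorffMeasure_frontier_inter_closedBall_le (m : ℕ) :
    ∃ D : ℝ≥0, ∀ K : Set (E (m + 1)), Convex ℝ K → (interior K).Nonempty → ∀ R : ℝ, 0 < R →
      μH[(m : ℝ)] (frontier K ∩ closedBall 0 R) ≤ D * ENNReal.ofReal (R ^ m) := by
  obtain ⟨L, hL⟩ : ∃ L : ℝ≥0, LipschitzWith L (WithLp.toLp 2 : (Fin (m + 1) → ℝ) → E (m + 1)) :=
    ⟨_, PiLp.lipschitzWith_toLp 2 _⟩
  refine ⟨L ^ m * (3 * (m + 1) * 2 ^ m), fun K hK hKi R hR => ?_⟩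
  set cube : Set (E (m + 1)) := WithLp.toLp 2 '' closedBall 0 R
  have hfrontier : frontier cube = WithLp.toLp 2 '' sphere 0 R := by
    rw [← frontier_closedBall _ hR.ne']
    exact ((PiLp.homeomorph 2 fun _ : Fin (m + 1) => ℝ).symm.image_frontier _).symm
  have hsub : closedBall 0 R ⊆ cube := fun x hx => by
    refine ⟨WithLp.ofLp x, ?_, rfl⟩
    rw [mem_closedBall_zero_iff] at hx ⊢
    exact (pi_norm_le_iff_of_nonneg hR.le).2 fun j => (PiLp.norm_apply_le x j).trans hx
  calc μH[(m : ℝ)] (frontier K ∩ closedBall 0 R)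
      ≤ μH[(m : ℝ)] (frontier K ∩ cube) := measure_mono (inter_subset_inter_right _ hsub)
    _ ≤ μH[(m : ℝ)] (WithLp.toLp 2 '' sphere (0 : Fin (m + 1) → ℝ) R) :=
        hfrontier ▸ hausdorffMeasure_frontier_inter_le hK hKi
          (hL.isBounded_image isBounded_closedBall) (Nat.cast_nonneg m)
    _ ≤ L ^ (m : ℝ) * μH[(m : ℝ)] (sphere (0 : Fin (m + 1) → ℝ) R) :=
        hL.hausdorffMeasure_image_le (Nat.cast_nonneg m) _
    _ ≤ L ^ (m : ℝ) * ((3 * (m + 1) * 2 ^ m : ℝ≥0) * ENNReal.ofReal (R ^ m)) := by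
        gcongr
        exact hausdorffMeasure_sphere_pi_le m hR
    _ = _ := by
        rw [ENNReal.rpow_natCast]
        push_cast
        ring

theorem integrableOn_frontier_exp_neg_norm {K : Set (E n)} (hK : Convex ℝ K)
    (hKi : (interior K).Nonempty) {c : ℝ} (hc : 0 < c) :
    IntegrableOn (fun y => Real.exp (-c * ‖y‖)) (frontier K) μH[(n : ℝ) - 1] := by
  cases n with
  | zero =>
    rw [(isClopen_discrete K).frontier_eq]
    exact integrableOn_empty
  | succ m =>
    obtain ⟨D, hD⟩ := exists_hausdorffMeasure_frontier_inter_closedBall_le m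
    rw [Nat.cast_succ, add_sub_cancel_right]
    refine integrable_exp_neg_norm_of_measure_closedBall_le (D := D) (m := m) (fun R hR => ?_) hc
    rw [Measure.restrict_apply measurableSet_closedBall, inter_comm]
    exact hD K hK hKi R hR

/-! ### Decay of exponentials of coercive convex functions -/

theorem expNeg_nonneg (a : EReal) : 0 ≤ expNeg a := by
  unfold expNeg
  split_ifs <;> positivity

theorem expNeg_le_exp_neg {a : EReal} {r : ℝ} (h : (r : EReal) ≤ a) :
    expNeg a ≤ Real.exp (-r) := by
  unfold expNeg
  split_ifs with ha
  · positivity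
  · exact Real.exp_le_exp.2 (neg_le_neg (EReal.toReal_le_toReal h (EReal.coe_ne_bot r) ha))

theorem le_expNeg_iff {a : EReal} (ha : a ≠ ⊥) {r : ℝ} (hr : 0 < r) :
    r ≤ expNeg a ↔ a ≤ ((-Real.log r : ℝ) : EReal) := by
  induction a with
  | bot => exact absurd rfl ha
  | top => simp [expNeg, hr]
  | coe a =>
    rw [expNeg, if_neg (EReal.coe_ne_top a), EReal.toReal_coe, EReal.coe_le_coe_iff,
      ← Real.log_le_iff_le_exp hr, le_neg]

theorem IsConvFn.convexOn_toReal {u : E n → EReal} (hu : IsConvFn u) :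
    ConvexOn ℝ (dom u) fun x => (u x).toReal := by
  have hcoe : ∀ {x}, x ∈ dom u → ((u x).toReal : EReal) = u x := fun hx =>
    EReal.coe_toReal hx (hu.ne_bot _)
  have hepi : ∀ {x}, x ∈ dom u → (x, (u x).toReal) ∈ epi u := fun hx => (hcoe hx).ge
  have hcomb : ∀ {x y}, x ∈ dom u → y ∈ dom u → ∀ {s t : ℝ}, 0 ≤ s → 0 ≤ t → s + t = 1 →
      u (s • x + t • y) ≤ ((s • (u x).toReal + t • (u y).toReal : ℝ) : EReal) :=
    fun hx hy _ _ hs ht hst => hu.convex_epi (hepi hx) (hepi hy) hs ht hst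
  have hdom : Convex ℝ (dom u) := fun x hx y hy s t hs ht hst =>
    ((hcomb hx hy hs ht hst).trans_lt (EReal.coe_lt_top _)).ne
  refine ⟨hdom, fun x hx y hy s t hs ht hst => ?_⟩
  have h := hcomb hx hy hs ht hst
  rwa [← hcoe (hdom hx hy hs ht hst), EReal.coe_le_coe_iff] at h

theorem IsConvFn.convex_setOf_le {u : E n → EReal} (hu : IsConvFn u) (c : ℝ) :
    Convex ℝ {x | u x ≤ c} := fun x hx y hy s t hs ht hst => by
  have h : (s • x + t • y, s • c + t • c) ∈ epi u :=
    hu.convex_epi (x := (x, c)) hx (y := (y, c)) hy hs ht hst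
  rwa [← add_smul, hst, one_smul] at h

theorem IsConvFn.quasiconcaveOn_expNeg {u : E n → EReal} (hu : IsConvFn u) :
    QuasiconcaveOn ℝ univ fun x => expNeg (u x) := by
  refine convex_univ.quasiconcaveOn_of_convex_ge fun r => ?_
  rcases le_or_gt r 0 with hr | hr
  · simpa [hr.trans (expNeg_nonneg _)] using convex_univ
  · simpa only [le_expNeg_iff (hu.ne_bot _) hr] using hu.convex_setOf_le _

theorem IsConvFn.upperSemicontinuous_expNeg {u : E n → EReal} (hu : IsConvFn u) :
    UpperSemicontinuous fun x => expNeg (u x) := by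
  refine upperSemicontinuous_iff_isClosed_preimage.2 fun r => ?_
  rcases le_or_gt r 0 with hr | hr
  · convert isClosed_univ
    exact eq_univ_of_forall fun x => hr.trans (expNeg_nonneg _)
  · convert hu.lsc.isClosed_preimage ((-Real.log r : ℝ) : EReal) using 1
    ext x
    exact le_expNeg_iff (hu.ne_bot x) hr

theorem IsConvFn.measurable_expNeg {u : E n → EReal} (hu : IsConvFn u) :
    Measurable fun x => expNeg (u x) :=
  hu.upperSemicontinuous_expNeg.measurable

theorem IsConvFn.add_norm_sub_div_le {u : E n → EReal} (hu : IsConvFn u) {p : E n} {R : ℝ}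
    (hR : 0 < R) (hp : p ∈ dom u)
    (hsphere : ∀ z ∈ sphere p R, (((u p).toReal + 1 : ℝ) : EReal) ≤ u z) {x : E n}
    (hx : R ≤ ‖x - p‖) : (((u p).toReal + ‖x - p‖ / R : ℝ) : EReal) ≤ u x := by
  by_cases hxdom : u x = ⊤
  · exact hxdom ▸ le_top
  have hxpos : 0 < ‖x - p‖ := hR.trans_le hx
  set s := R / ‖x - p‖
  have hs : 0 < s := by positivity
  have hs1 : s ≤ 1 := (div_le_one hxpos).2 hx
  set z := s • x + (1 - s) • p
  have hz : z ∈ sphere p R := by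
    rw [mem_sphere_iff_norm, show z - p = s • (x - p) by module, norm_smul,
      Real.norm_of_nonneg hs.le, div_mul_cancel₀ _ hxpos.ne']
  have hzdom : z ∈ dom u := hu.convexOn_toReal.1 hxdom hp hs.le (sub_nonneg.2 hs1) (by ring)
  have hlow : (u p).toReal + 1 ≤ (u z).toReal := by
    rw [← EReal.coe_le_coe_iff, EReal.coe_toReal hzdom (hu.ne_bot z)]
    exact hsphere z hz
  have hup : (u z).toReal ≤ s * (u x).toReal + (1 - s) * (u p).toReal :=
    hu.convexOn_toReal.2 hxdom hp hs.le (sub_nonneg.2 hs1) (by ring)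
  rw [← EReal.coe_toReal hxdom (hu.ne_bot x), EReal.coe_le_coe_iff, ← one_div_div,
    ← le_sub_iff_add_le', div_le_iff₀ hs]
  linarith

theorem IsConvFn.exists_le_of_isCompact {u : E n → EReal} (hu : IsConvFn u) {s : Set (E n)}
    (hs : IsCompact s) : ∃ c : ℝ, ∀ x ∈ s, (c : EReal) ≤ u x := by
  rcases s.eq_empty_or_nonempty with rfl | hne
  · exact ⟨0, fun x hx => hx.elim⟩
  obtain ⟨z, -, hmin⟩ := (hu.lsc.lowerSemicontinuousOn s).exists_isMinOn hne hs
  exact ⟨(u z).toReal, fun x hx => (EReal.coe_toReal_le (hu.ne_bot z)).trans (hmin hx)⟩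

theorem IsConvCoe.exists_pos_mul_norm_sub_le {u : E n → EReal} (hu : IsConvCoe u) :
    ∃ a : ℝ, 0 < a ∧ ∃ b : ℝ, ∀ x, ((a * ‖x‖ - b : ℝ) : EReal) ≤ u x := by
  obtain ⟨hconv, hcoe⟩ := hu
  obtain ⟨p, hp⟩ := hconv.exists_ne_top
  have hlarge : ∀ᶠ R : ℝ in atTop, ∀ x, R ≤ ‖x - p‖ → (((u p).toReal + 1 : ℝ) : EReal) ≤ u x := by
    have h := hcoe.eventually (eventually_ge_nhds (EReal.coe_lt_top ((u p).toReal + 1)))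
    rw [← cobounded_eq_cocompact, ← comap_dist_right_atTop p, eventually_comap,
      eventually_atTop] at h
    obtain ⟨R₀, hR₀⟩ := h
    filter_upwards [eventually_ge_atTop R₀] with R hR x hx
    exact hR₀ _ (hR.trans hx) x (dist_eq_norm x p)
  obtain ⟨R, hlarge, hR⟩ := (hlarge.and (eventually_gt_atTop 0)).exists
  obtain ⟨c, hc⟩ := hconv.exists_le_of_isCompact (isCompact_closedBall p R)
  refine ⟨R⁻¹, by positivity, max (-(u p).toReal) (1 - c) + R⁻¹ * ‖p‖, fun x => ?_⟩
  have htri : R⁻¹ * ‖x‖ ≤ R⁻¹ * ‖x - p‖ + R⁻¹ * ‖p‖ := by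
    rw [← mul_add]
    gcongr
    exact norm_le_norm_sub_add x p
  rcases le_total R ‖x - p‖ with hx | hx
  · refine le_trans (EReal.coe_le_coe_iff.2 ?_) (hconv.add_norm_sub_div_le hR hp
      (fun z hz => hlarge z (mem_sphere_iff_norm.1 hz).ge) hx)
    rw [div_eq_inv_mul]
    linarith [le_max_left (-(u p).toReal) (1 - c)]
  · refine le_trans (EReal.coe_le_coe_iff.2 ?_) (hc x (mem_closedBall_iff_norm.2 hx))
    have : R⁻¹ * ‖x - p‖ ≤ 1 := (inv_mul_le_one₀ hR).2 hx
    linarith [le_max_right (-(u p).toReal) (1 - c)]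

theorem IsConvCoe.exists_expNeg_le {u : E n → EReal} (hu : IsConvCoe u) :
    ∃ a : ℝ, 0 < a ∧ ∃ C : ℝ, 0 ≤ C ∧ ∀ x, expNeg (u x) ≤ C * Real.exp (-a * ‖x‖) := by
  obtain ⟨a, ha, b, hab⟩ := hu.exists_pos_mul_norm_sub_le
  refine ⟨a, ha, Real.exp b, Real.exp_nonneg b, fun x => (expNeg_le_exp_neg (hab x)).trans_eq ?_⟩
  rw [← Real.exp_add]
  ring_nf

theorem IsConvCoe.integrable_expNeg_mul_norm_rpow {u : E n → EReal} (hu : IsConvCoe u) {q : ℝ}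
    (hq : 0 < q) : Integrable fun x => expNeg (u x) * ‖x‖ ^ (q - (n : ℝ)) := by
  obtain ⟨a, ha, C, -, hC⟩ := hu.exists_expNeg_le
  have hexp := (integrable_exp_neg_mul_norm_rpow (volume : Measure (E n)) hq ha).const_mul C
  rw [finrank_euclideanSpace_fin] at hexp
  refine hexp.mono' (hu.1.measurable_expNeg.mul (measurable_norm.pow_const _)).aestronglyMeasurable
    (ae_of_all _ fun x => ?_)
  have := expNeg_nonneg (u x)
  rw [Real.norm_of_nonneg (by positivity), ← mul_assoc]
  gcongr
  exact hC x

theorem IsConvCoe.exists_sqrt_expNeg_le {u : E n → EReal} (hu : IsConvCoe u) :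
    ∃ a : ℝ, 0 < a ∧ ∃ C : ℝ, 0 ≤ C ∧ ∀ x, √(expNeg (u x)) ≤ C * Real.exp (-a * ‖x‖) := by
  obtain ⟨a, ha, C, hC0, hC⟩ := hu.exists_expNeg_le
  refine ⟨a / 2, half_pos ha, √C, Real.sqrt_nonneg C,
    fun x => (Real.sqrt_le_sqrt (hC x)).trans_eq ?_⟩
  rw [Real.sqrt_mul hC0, ← Real.exp_half]
  ring_nf

/-! ### The gradient -/

theorem measurable_grad (u : E n → EReal) : Measurable (grad u) :=
  (InnerProductSpace.toDual ℝ (E n)).symm.continuous.measurable.comp (measurable_fderiv ℝ _)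

theorem norm_grad (u : E n → EReal) (x : E n) :
    ‖grad u x‖ = ‖fderiv ℝ (fun y => (u y).toReal) x‖ :=
  LinearIsometryEquiv.norm_map _ _

theorem sqrt_expNeg {a : EReal} (ha : a ≠ ⊤) : √(expNeg a) = Real.exp (-(1 / 2) * a.toReal) := by
  rw [expNeg, if_neg ha, ← Real.exp_half]
  ring_nf

theorem norm_grad_mul_sqrt_expNeg_le {u : E n → EReal} {x : E n} (hx : x ∉ frontier (dom u)) :
    ‖grad u x‖ * √(expNeg (u x)) ≤ 2 * ‖fderiv ℝ (fun y => √(expNeg (u y))) x‖ := by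
  by_cases hxdom : x ∈ dom u
  · have hxint : x ∈ interior (dom u) := by
      by_contra h
      exact hx ⟨subset_closure hxdom, h⟩
    rw [norm_grad]
    by_cases hd : DifferentiableAt ℝ (fun y => (u y).toReal) x
    · have heq : (fun y => √(expNeg (u y))) =ᶠ[𝓝 x]
          fun y => Real.exp (-(1 / 2) * (u y).toReal) := by
        filter_upwards [mem_interior_iff_mem_nhds.1 hxint] with y hy using sqrt_expNeg hy
      rw [heq.fderiv_eq, (hd.hasFDerivAt.const_mul (-(1 / 2))).exp.fderiv, norm_smul, norm_smul,
        ← sqrt_expNeg hxdom, Real.norm_of_nonneg (Real.sqrt_nonneg _), norm_neg,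
        Real.norm_of_nonneg one_half_pos.le]
      linarith
    · rw [fderiv_zero_of_not_differentiableAt hd, norm_zero, zero_mul]
      positivity
  · rw [not_not.1 hxdom, expNeg, if_pos rfl, Real.sqrt_zero, mul_zero]
    positivity

theorem IsConvCoe.integrable_norm_grad_mul_sqrt_expNeg {u : E n → EReal} (hu : IsConvCoe u) :
    Integrable fun x => ‖grad u x‖ * √(expNeg (u x)) := by
  obtain ⟨a, ha, C, -, hC⟩ := hu.exists_sqrt_expNeg_le
  have hfderiv : Integrable (fderiv ℝ fun x => √(expNeg (u x))) :=
    integrable_fderiv_of_quasiconcaveOn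
      (hu.1.quasiconcaveOn_expNeg.monotone_comp (fun _ _ => Real.sqrt_le_sqrt))
      (Real.continuous_sqrt.comp_upperSemicontinuous hu.1.upperSemicontinuous_expNeg
        fun _ _ => Real.sqrt_le_sqrt)
      (fun _ => Real.sqrt_nonneg _) ha hC
  refine (hfderiv.norm.const_mul 2).mono'
    ((measurable_grad u).norm.mul hu.1.measurable_expNeg.sqrt).aestronglyMeasurable ?_
  filter_upwards [compl_mem_ae_iff.2 (hu.1.convexOn_toReal.1.addHaar_frontier volume)] with x hx
  rw [Real.norm_of_nonneg (by positivity)]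
  exact norm_grad_mul_sqrt_expNeg_le hx

theorem IsConvFn.exists_norm_grad_le_of_mem_interior {u : E n → EReal} (hu : IsConvFn u) {p : E n}
    (hp : p ∈ interior (dom u)) : ∃ K : ℝ, ∀ᶠ x in 𝓝 p, ‖grad u x‖ ≤ K := by
  obtain ⟨K, t, ht, hK⟩ := hu.convexOn_toReal.locallyLipschitzOn_interior hp
  rw [isOpen_interior.nhdsWithin_eq hp] at ht
  refine ⟨K, (eventually_mem_nhds_iff.2 ht).mono fun x hx => ?_⟩
  rw [norm_grad]
  exact norm_fderiv_le_of_lipschitzOn ℝ hx hK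

theorem IsConvCoe.integrable_norm_grad_mul_expNeg_mul_norm_rpow {u : E n → EReal}
    (hu : IsConvCoe u) (h0 : (0 : E n) ∈ interior (dom u)) {q : ℝ} (hq : 0 < q) :
    Integrable fun x => ‖grad u x‖ * (expNeg (u x) * ‖x‖ ^ (q - (n : ℝ))) := by
  obtain ⟨K, hK⟩ := hu.1.exists_norm_grad_le_of_mem_interior h0
  obtain ⟨r, hr, hball⟩ := Metric.eventually_nhds_iff_ball.1 hK
  obtain ⟨a, ha, C, hC0, hC⟩ := hu.exists_sqrt_expNeg_le
  obtain ⟨B, hB0, hB⟩ := exists_mul_norm_rpow_le_mul_exp_neg (q - (n : ℝ)) ha hC0 hr hC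
  have hmeas : AEStronglyMeasurable fun x => ‖grad u x‖ * (expNeg (u x) * ‖x‖ ^ (q - (n : ℝ))) :=
    ((measurable_grad u).norm.mul
      (hu.1.measurable_expNeg.mul (measurable_norm.pow_const _))).aestronglyMeasurable
  rw [← integrableOn_univ, ← union_compl_self (ball (0 : E n) r)]
  refine IntegrableOn.union ?_ ?_
  · refine ((hu.integrable_expNeg_mul_norm_rpow hq).const_mul K).integrableOn.mono' hmeas.restrict
      (ae_restrict_of_forall_mem measurableSet_ball fun x hx => ?_)
    have := expNeg_nonneg (u x)
    rw [Real.norm_of_nonneg (by positivity)]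
    gcongr
    exact hball x hx
  · refine (hu.integrable_norm_grad_mul_sqrt_expNeg.const_mul B).integrableOn.mono' hmeas.restrict
      (ae_restrict_of_forall_mem measurableSet_ball.compl fun x hx => ?_)
    have hx : r ≤ ‖x‖ := by simpa using hx
    have hexp : Real.exp (-(a / 2) * ‖x‖) ≤ 1 := Real.exp_le_one_iff.2 (by nlinarith)
    have := expNeg_nonneg (u x)
    have hBx : √(expNeg (u x)) * ‖x‖ ^ (q - (n : ℝ)) ≤ B :=
      (hB x hx).trans (mul_le_of_le_one_right hB0 hexp)
    rw [Real.norm_of_nonneg (by positivity)]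
    calc ‖grad u x‖ * (expNeg (u x) * ‖x‖ ^ (q - (n : ℝ)))
        = √(expNeg (u x)) * ‖x‖ ^ (q - (n : ℝ)) * (‖grad u x‖ * √(expNeg (u x))) := by
          nth_rw 1 [← Real.mul_self_sqrt this]
          ring
      _ ≤ B * (‖grad u x‖ * √(expNeg (u x))) := by gcongr

theorem IsConvCoe.integrable_abs_comp_grad {u : E n → EReal} (hu : IsConvCoe u)
    (h0 : (0 : E n) ∈ interior (dom u)) {ζ : E n → ℝ} (hζ : Measurable ζ) {A B : ℝ}
    (hAB : ∀ x, |ζ x| ≤ A + B * ‖x‖) {q : ℝ} (hq : 0 < q) :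
    Integrable fun x => |ζ (grad u x)| * expNeg (u x) * ‖x‖ ^ (q - (n : ℝ)) := by
  refine (((hu.integrable_expNeg_mul_norm_rpow hq).const_mul A).add
    ((hu.integrable_norm_grad_mul_expNeg_mul_norm_rpow h0 hq).const_mul B)).mono' ?_
    (ae_of_all _ fun x => ?_)
  · exact (((hζ.comp (measurable_grad u)).abs.mul hu.1.measurable_expNeg).mul
      (measurable_norm.pow_const _)).aestronglyMeasurable
  · have := expNeg_nonneg (u x)
    rw [Real.norm_of_nonneg (by positivity), Pi.add_apply, ← mul_assoc B, ← add_mul, mul_assoc]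
    gcongr
    exact hAB _

/-! ### Recession functions -/

theorem IsCRec.exists_abs_rec_le {ζ ρ : E n → ℝ} (hζ : IsCRec ζ ρ) :
    ∃ M : ℝ, ∀ x, |ρ x| ≤ M * ‖x‖ := by
  obtain ⟨M, hM⟩ := (isCompact_sphere (0 : E n) 1).exists_bound_of_continuousOn
    hζ.rec_cont.continuousOn
  refine ⟨M, fun x => ?_⟩
  rcases eq_or_ne x 0 with rfl | hx
  · simp [hζ.rec_zero]
  · have hunit : ‖x‖⁻¹ • x ∈ sphere (0 : E n) 1 := by simp [norm_smul, hx]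
    have hρ : ρ x = ‖x‖ * ρ (‖x‖⁻¹ • x) := by
      rw [← hζ.rec_homog _ (norm_nonneg x), smul_inv_smul₀ (norm_ne_zero_iff.2 hx)]
    rw [hρ, abs_mul, abs_norm, mul_comm]
    gcongr
    exact hM _ hunit

theorem IsCRec.exists_abs_le {ζ ρ : E n → ℝ} (hζ : IsCRec ζ ρ) :
    ∃ A B : ℝ, ∀ x, |ζ x| ≤ A + B * ‖x‖ := by
  obtain ⟨M, hM⟩ := hζ.exists_abs_rec_le
  obtain ⟨C, hC⟩ := hζ.diff_bdd
  refine ⟨C, M, fun x => ?_⟩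
  linarith [abs_sub_abs_le_abs_sub (ζ x) (ρ x), abs_sub_comm (ρ x) (ζ x), hM x, hC x]

/-! ### The two integrals -/

theorem IsConvCoe.integrableOn_frontier_expNeg_mul_norm_rpow {u : E n → EReal} (hu : IsConvCoe u)
    (h0 : (0 : E n) ∈ interior (dom u)) (s : ℝ) :
    IntegrableOn (fun y => expNeg (u y) * ‖y‖ ^ s) (frontier (dom u)) μH[(n : ℝ) - 1] := by
  obtain ⟨r, hr, hball⟩ := Metric.mem_nhds_iff.1 (isOpen_interior.mem_nhds h0)
  obtain ⟨a, ha, C, hC0, hC⟩ := hu.exists_expNeg_le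
  obtain ⟨B, -, hB⟩ := exists_mul_norm_rpow_le_mul_exp_neg s ha hC0 hr hC
  have hexp : IntegrableOn (fun y => Real.exp (-(a / 2) * ‖y‖)) (frontier (dom u))
      μH[(n : ℝ) - 1] :=
    integrableOn_frontier_exp_neg_norm hu.1.convexOn_toReal.1 ⟨0, h0⟩ (half_pos ha)
  refine (hexp.const_mul B).mono'
    (hu.1.measurable_expNeg.mul (measurable_norm.pow_const _)).aestronglyMeasurable
    (ae_restrict_of_forall_mem isClosed_frontier.measurableSet fun y hy => ?_)
  have hyr : r ≤ ‖y‖ := not_lt.1 fun h => hy.2 (hball (mem_ball_zero_iff.2 h))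
  have := expNeg_nonneg (u y)
  rw [Real.norm_of_nonneg (by positivity)]
  exact hB y hyr

theorem statement_11_general {n : ℕ} (q : ℝ) (hq : 0 < q)
    (u : E n → EReal) (hu : IsConvCoe u) (h0 : (0 : E n) ∈ interior (dom u))
    (ζ ρ : E n → ℝ) (hζ : IsCRec ζ ρ) (N : E n → E n)
    (hNmeas : AEMeasurable N ((μH[(n : ℝ) - 1]).restrict (frontier (dom u))))
    (hN : ∀ᵐ y ∂(μH[(n : ℝ) - 1]).restrict (frontier (dom u)),
      IsOuterNormalAt (dom u) (N y) y) :
    Integrable (fun x : E n => |ζ (grad u x)| * expNeg (u x) * ‖x‖ ^ (q - (n : ℝ))) ∧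
    IntegrableOn (fun y => |ρ (N y)| * expNeg (u y) * ‖y‖ ^ (q - (n : ℝ)))
      (frontier (dom u)) μH[(n : ℝ) - 1] := by
  obtain ⟨A, B, hAB⟩ := hζ.exists_abs_le
  obtain ⟨M, hM⟩ := hζ.exists_abs_rec_le
  refine ⟨hu.integrable_abs_comp_grad h0 hζ.cont.measurable hAB hq, ?_⟩
  have hbdd : ∀ᵐ y ∂(μH[(n : ℝ) - 1]).restrict (frontier (dom u)), ‖|ρ (N y)|‖ ≤ M := by
    filter_upwards [hN] with y hy
    simpa [hy.1] using hM (N y)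
  simpa only [IntegrableOn, mul_assoc, Function.comp_apply] using
    (hu.integrableOn_frontier_expNeg_mul_norm_rpow h0 (q - n)).bdd_mul
      (hζ.rec_cont.abs.measurable.comp_aemeasurable hNmeas).aestronglyMeasurable hbdd

theorem statement_11 {n : ℕ} (q : ℝ) (hq : 0 < q)
    (u : E n → EReal) (hu : IsConvCoe u) (h0 : (0 : E n) ∈ interior (dom u))
    (ζ ρ : E n → ℝ) (hζ : IsCRec ζ ρ) (L : NNReal) (hLip : LipschitzWith L ζ)
    (N : E n → E n) (hNmeas : Measurable N)
    (hN : ∀ᵐ y ∂(μH[(n : ℝ) - 1]).restrict (frontier (dom u)),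
      IsOuterNormalAt (dom u) (N y) y) :
    Integrable (fun x : E n => |ζ (grad u x)| * expNeg (u x) * ‖x‖ ^ (q - (n : ℝ))) ∧
    IntegrableOn (fun y => |ρ (N y)| * expNeg (u y) * ‖y‖ ^ (q - (n : ℝ)))
      (frontier (dom u)) μH[(n : ℝ) - 1] :=
  statement_11_general q hq u hu h0 ζ ρ hζ N hNmeas.aemeasurable hN

end PaperJU

end
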